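/- Let U : ℝ^d → [-∞,∞) be a utility function supported on ℝ^d_+ which is upper semi-continuous, strictly concave on int(ℝ^d_+), essentially smooth, and asymptotically satiable. Suppose in addition that U is bounded from below on int(ℝ^d_+), multivariate risk averse, and has reasonable asymptotic elasticity. Then the dual function U* satisfies the growth condition: there exists ζ : (0,1] → [0,∞) such that U*(ε x*) ≤ ζ(ε) (max(U*(x*), 0) + 1) for all ε ∈ (0,1] and all x* ∈ int(ℝ^d_+). -/

import Mathlib

/-!
Reasonable asymptotic elasticity gives `c`, `lam > 1` and a radius `R` with
`lam * ⟪x, ∇U(x)⟫ ≤ U(x) + c` whenever `x` is interior to the orthant and `R ≤ ‖x‖`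
(`exists_elasticity_bound`). Along a ray this is a differential inequality, which integrates
to the power bound `U(t x) + c ≤ t ^ (1 / lam) * (U(x) + c)` for `t ≥ 1`
(`ray_growth`, via the scalar lemma `le_rpow_mul_of_deriv_bound`).

Given `ε ∈ (0, 1]`, choose `T ≥ 1` with `T ^ (1 / lam) = ε * T`. For interior `x` with
`‖x‖ ≥ R * T`, applying the power bound at `x / T` yields
`U(x) - ε ⟪x, y⟫ ≤ T ^ (1 / lam) * (U(x / T) - ⟪x / T, y⟫ + c) - c`, and the bracket is at most
`U*(y) + c`. For the remaining interior `x`, monotonicity bounds `U(x)` by the value of `U` at the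
point with all coordinates `R * T`, which depends on `ε` only. Finally, monotonicity along the
diagonal direction extends a bound over the interior to all of `ℝ^d`
(`dualFn_le_of_forall_interior`).
-/

open Set Filter Topology
open scoped RealInnerProductSpace

noncomputable section

/-- Euclidean space `ℝ^d`. -/
abbrev Euc (d : ℕ) := EuclideanSpace ℝ (Fin d)

variable {d : ℕ}

/-- The hypograph of an `EReal`-valued function on `ℝ^d`. -/
def hypograph (U : Euc d → EReal) : Set (Euc d × ℝ) :=
  {p | (p.2 : EReal) ≤ U p.1}

/-- `U : ℝ^d → [-∞,∞)` is proper concave if its hypograph is convex, it never takes the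
value `+∞`, and its effective domain is nonempty. -/
def ProperConcave (U : Euc d → EReal) : Prop :=
  Convex ℝ (hypograph U) ∧ (∀ x, U x ≠ ⊤) ∧ (∃ x, U x ≠ ⊥)

/-- The effective domain `dom(U) = {x : U(x) > -∞}`. -/
def effDom (U : Euc d → EReal) : Set (Euc d) := {x | U x ≠ ⊥}

/-- A convex cone: `λC + μC ⊆ C` for all `λ, μ ≥ 0`. -/
def IsConvexCone (C : Set (Euc d)) : Prop :=
  ∀ a b : ℝ, 0 ≤ a → 0 ≤ b → ∀ x ∈ C, ∀ y ∈ C, a • x + b • y ∈ C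

/-- The nonnegative orthant `ℝ^d_+`. -/
def posOrthant (d : ℕ) : Set (Euc d) := {x | ∀ i, 0 ≤ x i}

/-- A multivariate utility function: a proper concave `U` whose support cone
`C_U := cl(dom U)` is a convex cone with `ℝ^d_+ ⊆ C_U ≠ ℝ^d`, and which is nondecreasing
with respect to the preorder induced by `C_U`. -/
def IsUtility (U : Euc d → EReal) : Prop :=
  ProperConcave U ∧ IsConvexCone (closure (effDom U)) ∧
    posOrthant d ⊆ closure (effDom U) ∧ closure (effDom U) ≠ univ ∧
    ∀ x x' : Euc d, x' - x ∈ closure (effDom U) → U x ≤ U x'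

/-- The dual function `U*(x*) = sup_x { U(x) - ⟨x, x*⟩ }`. -/
def dualFn (U : Euc d → EReal) (y : Euc d) : EReal :=
  ⨆ x : Euc d, U x - ((⟪x, y⟫ : ℝ) : EReal)

/-- The effective domain of the dual function, `dom(U*) = {x* : U*(x*) < ∞}`. -/
def effDomStar (U : Euc d → EReal) : Set (Euc d) := {y | dualFn U y ≠ ⊤}

/-- The superdifferential `∂U(x) = {x* : U(z) ≤ U(x) + ⟨z-x, x*⟩ ∀ z}`. -/
def superdiff (U : Euc d → EReal) (x : Euc d) : Set (Euc d) :=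
  {g | ∀ z : Euc d, U z ≤ U x + ((⟪z - x, g⟫ : ℝ) : EReal)}

/-- The closure `cl(U)` of `U`: the function whose hypograph is the closure of the
hypograph of `U`. -/
def clFn (U : Euc d → EReal) (x : Euc d) : EReal :=
  ⨆ r ∈ {r : ℝ | (x, r) ∈ closure (hypograph U)}, (r : EReal)

/-- `U` is asymptotically satiable: for every `ε > 0` there is `x` such that
`∂(cl U)(x) ∩ [0,ε)^d ≠ ∅`. -/
def AsympSatiable (U : Euc d → EReal) : Prop :=
  ∀ ε : ℝ, 0 < ε → ∃ x : Euc d, ∃ g ∈ superdiff (clFn U) x, ∀ i, 0 ≤ g i ∧ g i < ε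

/-- A utility function supported on `ℝ^d_+`: proper concave, `cl(dom U) = ℝ^d_+`, and
nondecreasing with respect to the preorder induced by `ℝ^d_+`. -/
def SupportedOnOrthant (U : Euc d → EReal) : Prop :=
  ProperConcave U ∧ closure (effDom U) = posOrthant d ∧
    ∀ x x' : Euc d, x' - x ∈ posOrthant d → U x ≤ U x'

/-- `U` is multivariate risk averse:
`U(x) + U(x+z+z') ≤ U(x+z) + U(x+z')` for all `x` and all `z, z' ≥ 0`. -/
def MultivariateRiskAverse (U : Euc d → EReal) : Prop :=
  ∀ x : Euc d, ∀ z ∈ posOrthant d, ∀ z' ∈ posOrthant d,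
    U x + U (x + z + z') ≤ U (x + z) + U (x + z')

/-- `U` has decreasing marginals:
`U(x+z) - U(x) ≥ U(x'+z) - U(x')` whenever `x ∈ dom(U)`, `x' ≽ x` and `z ≥ 0`. -/
def DecreasingMarginals (U : Euc d → EReal) : Prop :=
  ∀ x ∈ effDom U, ∀ x' : Euc d, x' - x ∈ posOrthant d →
    ∀ z ∈ posOrthant d, U (x' + z) - U x' ≤ U (x + z) - U x

/-- `U` is strictly concave on the interior of `ℝ^d_+`. -/
def StrictConcaveOnIntOrthant (U : Euc d → EReal) : Prop :=
  ∀ x ∈ interior (posOrthant d), ∀ y ∈ interior (posOrthant d), x ≠ y →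
    ∀ a b : ℝ, 0 < a → 0 < b → a + b = 1 →
      (a : EReal) * U x + (b : EReal) * U y < U (a • x + b • y)

/-- `U` is essentially smooth, with gradient map `g` on `int(dom U)`: `int(dom U)` is
nonempty, `U` is differentiable on `int(dom U)` with gradient `g`, and `|∇U(xₙ)| → ∞`
along every sequence in `int(dom U)` converging to a boundary point of `int(dom U)`. -/
def EssSmoothWith (U : Euc d → EReal) (g : Euc d → Euc d) : Prop :=
  (interior (effDom U)).Nonempty ∧
    (∀ x ∈ interior (effDom U), HasGradientAt (fun y => (U y).toReal) (g x) x) ∧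
    ∀ (x : ℕ → Euc d) (b : Euc d), (∀ n, x n ∈ interior (effDom U)) →
      b ∈ frontier (interior (effDom U)) → Tendsto x atTop (𝓝 b) →
      Tendsto (fun n => ‖g (x n)‖) atTop atTop

/-- `U` (with gradient map `g`) has reasonable asymptotic elasticity:
`sup_{c ∈ ℝ} liminf_{x ∈ int(ℝ^d_+), |x| → ∞} (U(x)+c)/⟨x, ∇U(x)⟩ > 1`. -/
def ReasonableAsymptoticElasticity (U : Euc d → EReal) (g : Euc d → Euc d) : Prop :=
  1 < ⨆ c : ℝ, Filter.liminf
      (fun x : Euc d => ((((U x).toReal + c) / (⟪x, g x⟫ : ℝ) : ℝ) : EReal))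
      ((𝓟 (interior (posOrthant d))) ⊓ Filter.comap norm Filter.atTop)

/-- The dual function `U*` satisfies the growth condition: there is `ζ : (0,1] → [0,∞)`
with `U*(ε x*) ≤ ζ(ε) (U*(x*)⁺ + 1)` for all `ε ∈ (0,1]` and `x* ∈ int(ℝ^d_+)`. -/
def GrowthCondition (U : Euc d → EReal) : Prop :=
  ∃ ζ : ℝ → ℝ, (∀ ε ∈ Set.Ioc (0 : ℝ) 1, 0 ≤ ζ ε) ∧
    ∀ ε ∈ Set.Ioc (0 : ℝ) 1, ∀ y ∈ interior (posOrthant d),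
      dualFn U (ε • y) ≤ (ζ ε : EReal) * (max (dualFn U y) 0 + 1)

/-! ### The nonnegative orthant -/

lemma mem_interior_posOrthant {x : Euc d} :
    x ∈ interior (posOrthant d) ↔ ∀ i, 0 < x i := by
  constructor
  · intro hx i
    have hcont : Tendsto (fun s : ℝ => x - s • EuclideanSpace.single i (1 : ℝ)) (𝓝[>] 0)
        (𝓝 x) := by
      have : Continuous (fun s : ℝ => x - s • EuclideanSpace.single i (1 : ℝ)) := by fun_prop
      have h0 := this.tendsto 0
      simp only [zero_smul, sub_zero] at h0
      exact h0.mono_left nhdsWithin_le_nhds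
    have hev := hcont.eventually (isOpen_interior.mem_nhds hx)
    obtain ⟨s, hs, hs0⟩ := (hev.and self_mem_nhdsWithin).exists
    have h1 := interior_subset hs i
    have hs0' : 0 < s := hs0
    simp at h1
    linarith
  · intro hx
    have hopen : IsOpen {x : Euc d | ∀ i, 0 < x i} := by
      simp only [Set.ofPred_forall]
      exact isOpen_iInter_of_finite fun i => isOpen_lt continuous_const (by fun_prop)
    exact interior_maximal (fun z hz i => (hz i).le) hopen hx

lemma smul_mem_interior_posOrthant {x : Euc d} (hx : x ∈ interior (posOrthant d)) {t : ℝ}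
    (ht : 0 < t) : t • x ∈ interior (posOrthant d) := by
  rw [mem_interior_posOrthant] at hx ⊢
  intro i
  simpa using mul_pos ht (hx i)

lemma inner_nonneg_of_mem_posOrthant {x y : Euc d} (hx : x ∈ posOrthant d)
    (hy : y ∈ posOrthant d) : 0 ≤ (⟪x, y⟫ : ℝ) := by
  rw [PiLp.inner_apply]
  refine Finset.sum_nonneg fun i _ => ?_
  simpa using mul_nonneg (hy i) (hx i)

/-- The point of `ℝ^d` all of whose coordinates equal `r`. -/
def diagPt (d : ℕ) (r : ℝ) : Euc d := WithLp.toLp 2 fun _ => r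

@[simp] lemma diagPt_apply (r : ℝ) (i : Fin d) : diagPt d r i = r := rfl

/-! ### A scalar differential inequality -/

/-- Integrated form of the differential inequality `t f'(t) ≤ p f(t)`: the function
`f(t) t ^ (-p)` is nonincreasing. -/
lemma le_rpow_mul_of_deriv_bound {f f' : ℝ → ℝ} {p T : ℝ} (hT : 1 ≤ T)
    (hf : ∀ t ∈ Icc 1 T, HasDerivAt f (f' t) t)
    (hb : ∀ t ∈ Icc 1 T, t * f' t ≤ p * f t) : f T ≤ T ^ p * f 1 := by
  have hder : ∀ t ∈ Icc (1 : ℝ) T, HasDerivAt (fun t => f t * t ^ (-p))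
      (f' t * t ^ (-p) + f t * (-p * t ^ (-p - 1))) t := by
    intro t ht
    have ht0 : 0 < t := lt_of_lt_of_le one_pos ht.1
    exact (hf t ht).mul (Real.hasDerivAt_rpow_const (Or.inl ht0.ne'))
  have hanti : AntitoneOn (fun t => f t * t ^ (-p)) (Icc 1 T) := by
    refine antitoneOn_of_deriv_nonpos (convex_Icc _ _)
      (fun t ht => (hder t ht).continuousAt.continuousWithinAt)
      (fun t ht => (hder t (interior_subset ht)).differentiableAt.differentiableWithinAt) ?_
    intro t ht
    have ht' := interior_subset ht
    have ht0 : 0 < t := lt_of_lt_of_le one_pos ht'.1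
    rw [(hder t ht').deriv]
    have hsplit : t ^ (-p) = t ^ (-p - 1) * t := by
      rw [← Real.rpow_add_one ht0.ne']; congr 1; ring
    have hpos : 0 < t ^ (-p - 1) := Real.rpow_pos_of_pos ht0 _
    have hfac : f' t * t ^ (-p) + f t * (-p * t ^ (-p - 1))
        = t ^ (-p - 1) * (t * f' t - p * f t) := by
      rw [hsplit]; ring
    rw [hfac]
    exact mul_nonpos_of_nonneg_of_nonpos hpos.le (by linarith [hb t ht'])
  have h := hanti (left_mem_Icc.2 hT) (right_mem_Icc.2 hT) hT
  simp only [Real.one_rpow, mul_one] at h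
  have hT0 : 0 < T := lt_of_lt_of_le one_pos hT
  rw [Real.rpow_neg hT0.le, ← div_eq_mul_inv, div_le_iff₀ (Real.rpow_pos_of_pos hT0 _)] at h
  linarith

/-! ### Utility functions along rays -/

section Utility

variable {U : Euc d → EReal} {g : Euc d → Euc d}

lemma hasDerivAt_ray (hfin : ∀ x ∈ interior (posOrthant d), U x ≠ ⊥)
    (hes : EssSmoothWith U g) {x : Euc d} {t : ℝ} (hx : t • x ∈ interior (posOrthant d)) :
    HasDerivAt (fun s : ℝ => (U (s • x)).toReal) (⟪x, g (t • x)⟫ : ℝ) t := by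
  have hmem : t • x ∈ interior (effDom U) :=
    interior_maximal (fun z hz => hfin z hz) isOpen_interior hx
  have h1 := (hes.2.1 _ hmem).hasFDerivAt
  have h2 : HasDerivAt (fun s : ℝ => s • x) x t := by
    simpa using (hasDerivAt_id t).smul_const x
  have h3 := h1.comp_hasDerivAt t h2
  rw [InnerProductSpace.toDual_apply_apply, real_inner_comm] at h3
  exact h3

lemma toReal_mono (hfin : ∀ x ∈ interior (posOrthant d), U x ≠ ⊥)
    (hU : SupportedOnOrthant U) {x x' : Euc d} (hx : x ∈ interior (posOrthant d))
    (hxx' : x' - x ∈ posOrthant d) : (U x).toReal ≤ (U x').toReal :=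
  EReal.toReal_le_toReal (hU.2.2 x x' hxx') (hfin x hx) (hU.1.2.1 x')

/-- The radial derivative of a nondecreasing function is nonnegative. -/
lemma inner_gradient_nonneg (hfin : ∀ x ∈ interior (posOrthant d), U x ≠ ⊥)
    (hU : SupportedOnOrthant U) (hes : EssSmoothWith U g) {x : Euc d}
    (hx : x ∈ interior (posOrthant d)) : 0 ≤ (⟪x, g x⟫ : ℝ) := by
  have hd := hasDerivAt_ray (t := 1) hfin hes (by simpa using hx)
  have hmono : MonotoneOn (fun s : ℝ => (U (s • x)).toReal) (Ioi 0) := by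
    intro s hs t _ hst
    refine toReal_mono hfin hU (smul_mem_interior_posOrthant hx hs) ?_
    intro i
    have := mul_nonneg (sub_nonneg.2 hst) (interior_subset hx i)
    simpa [sub_mul] using this
  have h := hmono.derivWithin_nonneg (x := 1)
  rw [hd.hasDerivWithinAt.derivWithin (isOpen_Ioi.uniqueDiffWithinAt (by simp))] at h
  simpa using h

/-- Reasonable asymptotic elasticity as an inequality without quotients. The junk value of a
quotient with vanishing denominator is harmless, being smaller than `lam`. -/
lemma exists_elasticity_bound (hfin : ∀ x ∈ interior (posOrthant d), U x ≠ ⊥)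
    (hU : SupportedOnOrthant U) (hes : EssSmoothWith U g)
    (hrae : ReasonableAsymptoticElasticity U g) :
    ∃ c lam R : ℝ, 1 < lam ∧ ∀ x ∈ interior (posOrthant d), R ≤ ‖x‖ →
      lam * (⟪x, g x⟫ : ℝ) ≤ (U x).toReal + c := by
  obtain ⟨c, hc⟩ := lt_iSup_iff.1 hrae
  obtain ⟨lam, h1, h2⟩ := EReal.lt_iff_exists_real_btwn.1 hc
  have hlam : 1 < lam := by exact_mod_cast h1
  have hev := eventually_lt_of_lt_liminf h2
  rw [inf_comm, eventually_inf_principal, eventually_comap] at hev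
  obtain ⟨R, hR⟩ := eventually_atTop.1 hev
  refine ⟨c, lam, R, hlam, fun x hx hnorm => ?_⟩
  have h := hR ‖x‖ hnorm x rfl hx
  rw [EReal.coe_lt_coe_iff] at h
  have hnn := inner_gradient_nonneg hfin hU hes hx
  have hne : (⟪x, g x⟫ : ℝ) ≠ 0 := by
    intro h0
    rw [h0, div_zero] at h
    linarith
  rw [lt_div_iff₀ (lt_of_le_of_ne hnn hne.symm)] at h
  exact h.le

/-- Far from the origin, `U + c` grows at most like the power `1 / lam` along rays. -/
lemma ray_growth (hfin : ∀ x ∈ interior (posOrthant d), U x ≠ ⊥) (hes : EssSmoothWith U g)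
    {c lam R : ℝ} (hlam : 1 < lam)
    (hel : ∀ x ∈ interior (posOrthant d), R ≤ ‖x‖ →
      lam * (⟪x, g x⟫ : ℝ) ≤ (U x).toReal + c)
    {x : Euc d} (hx : x ∈ interior (posOrthant d)) (hRx : R ≤ ‖x‖) {T : ℝ} (hT : 1 ≤ T) :
    (U (T • x)).toReal + c ≤ T ^ (1 / lam) * ((U x).toReal + c) := by
  have hmem : ∀ t ∈ Icc (1 : ℝ) T, t • x ∈ interior (posOrthant d) := fun t ht =>
    smul_mem_interior_posOrthant hx (lt_of_lt_of_le one_pos ht.1)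
  have h := le_rpow_mul_of_deriv_bound (f := fun t => (U (t • x)).toReal + c)
    (f' := fun t => (⟪x, g (t • x)⟫ : ℝ)) (p := 1 / lam) hT
    (fun t ht => (hasDerivAt_ray hfin hes (hmem t ht)).add_const c) ?_
  · simpa using h
  · intro t ht
    have hnorm : R ≤ ‖t • x‖ := by
      rw [norm_smul, Real.norm_of_nonneg (zero_le_one.trans ht.1)]
      exact hRx.trans (le_mul_of_one_le_left (norm_nonneg x) ht.1)
    have hb := hel _ (hmem t ht) hnorm
    rw [real_inner_smul_left] at hb
    have hlam0 : 0 < lam := one_pos.trans hlam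
    rw [one_div, ← div_eq_inv_mul, le_div_iff₀ hlam0]
    linarith

/-! ### Bounding the dual function from the open orthant -/

/-- An upper bound for the dual function need only be checked on the open orthant: a point `x` of
the effective domain is approximated from above by the interior points `x + (s, …, s)`. -/
lemma dualFn_le_of_forall_interior (hU : SupportedOnOrthant U) {y : Euc d} {B : ℝ}
    (hB : ∀ x ∈ interior (posOrthant d), (U x).toReal - (⟪x, y⟫ : ℝ) ≤ B) :
    dualFn U y ≤ (B : EReal) := by
  refine iSup_le fun x => ?_
  by_cases hbot : U x = ⊥
  · simp [hbot]
  have hx : x ∈ posOrthant d := hU.2.1 ▸ subset_closure hbot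
  have hreal : (U x).toReal - (⟪x, y⟫ : ℝ) ≤ B := by
    have hlim : Tendsto (fun s : ℝ => B + (⟪diagPt d s, y⟫ : ℝ)) (𝓝[>] 0) (𝓝 B) := by
      have heq : ∀ s : ℝ, diagPt d s = s • diagPt d 1 := by
        intro s; ext i; simp
      have hc : Continuous (fun s : ℝ => B + (⟪s • diagPt d 1, y⟫ : ℝ)) := by fun_prop
      have h0 := hc.tendsto 0
      simp only [zero_smul, inner_zero_left, add_zero] at h0
      simp only [← heq] at h0
      exact h0.mono_left nhdsWithin_le_nhds
    refine ge_of_tendsto hlim ?_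
    filter_upwards [self_mem_nhdsWithin] with s hs
    have hs0 : 0 < s := hs
    have hmem : x + diagPt d s ∈ interior (posOrthant d) := by
      rw [mem_interior_posOrthant]
      intro i
      have := hx i
      simp only [PiLp.add_apply, diagPt_apply]
      linarith
    have h1 := hB _ hmem
    have h2 : (U x).toReal ≤ (U (x + diagPt d s)).toReal := by
      refine EReal.toReal_le_toReal (hU.2.2 _ _ ?_) hbot (hU.1.2.1 _)
      intro i
      simpa using hs0.le
    rw [inner_add_left] at h1
    linarith
  rw [← EReal.coe_toReal (hU.1.2.1 x) hbot, ← EReal.coe_sub]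
  exact_mod_cast hreal

end Utility

/-! ### The growth condition -/

/-- If a utility function supported on `ℝ^d_+`, satisfying the standing regularity
assumptions (upper semi-continuity, strict concavity on `int(ℝ^d_+)`, essential
smoothness, asymptotic satiability), is bounded from below on `int(ℝ^d_+)`, multivariate
risk averse and has reasonable asymptotic elasticity, then `U*` satisfies the growth
condition. -/
theorem growthCondition_of_reasonableAsymptoticElasticity
    (U : Euc d → EReal) (hU : SupportedOnOrthant U)
    (husc : UpperSemicontinuous U)
    (hsc : StrictConcaveOnIntOrthant U)
    (g : Euc d → Euc d) (hes : EssSmoothWith U g)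
    (hAS : AsympSatiable U)
    (hbdd : ∃ M : ℝ, ∀ x ∈ interior (posOrthant d), (M : EReal) ≤ U x)
    (hmvra : MultivariateRiskAverse U)
    (hrae : ReasonableAsymptoticElasticity U g) :
    GrowthCondition U := by
  obtain ⟨M, hM⟩ := hbdd
  have hfin : ∀ x ∈ interior (posOrthant d), U x ≠ ⊥ := fun x hx h => by
    have := hM x hx
    rw [h] at this
    exact absurd this (by simp)
  obtain ⟨c, lam, R, hlam, hel⟩ := exists_elasticity_bound hfin hU hes hrae
  have hlam0 : 0 < lam := one_pos.trans hlam
  -- `T ε` solves `T ^ (1 / lam) = ε * T`.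
  set T : ℝ → ℝ := fun ε => ε ^ (1 / (1 / lam - 1)) with hTdef
  set ζ : ℝ → ℝ := fun ε => T ε ^ (1 / lam) * (1 + |c|) + |c| +
    |(U (diagPt d (R * T ε))).toReal| + 1 with hζdef
  have hexp : 1 / lam - 1 < 0 := by
    rw [sub_neg, div_lt_one hlam0]; exact hlam
  have hT1 : ∀ ε ∈ Ioc (0 : ℝ) 1, 1 ≤ T ε := fun ε hε =>
    Real.one_le_rpow_of_pos_of_le_one_of_nonpos hε.1 hε.2 (one_div_neg.2 hexp).le
  have hK0 : ∀ ε ∈ Ioc (0 : ℝ) 1, 0 ≤ T ε ^ (1 / lam) := fun ε hε =>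
    Real.rpow_nonneg (zero_le_one.trans (hT1 ε hε)) _
  have hKT : ∀ ε ∈ Ioc (0 : ℝ) 1, T ε ^ (1 / lam) = ε * T ε := by
    intro ε hε
    have hTpos : 0 < T ε := one_pos.trans_le (hT1 ε hε)
    have h1 : T ε ^ (1 / lam - 1) = ε := by
      rw [hTdef]
      simp only
      rw [← Real.rpow_mul hε.1.le, one_div_mul_cancel hexp.ne, Real.rpow_one]
    rw [Real.rpow_sub_one hTpos.ne', div_eq_iff hTpos.ne'] at h1
    exact h1
  have hζ1 : ∀ ε ∈ Ioc (0 : ℝ) 1, 0 < ζ ε := by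
    intro ε hε
    have h1 := hK0 ε hε
    simp only [hζdef]
    positivity
  refine ⟨ζ, fun ε hε => (hζ1 ε hε).le, fun ε hε y hy => ?_⟩
  by_cases htop : dualFn U y = ⊤
  · have : ((ζ ε : ℝ) : EReal) * (max (dualFn U y) 0 + 1) = ⊤ := by
      rw [htop, max_eq_left le_top, ← EReal.coe_one, EReal.top_add_coe,
        EReal.coe_mul_top_of_pos (hζ1 ε hε)]
    rw [this]
    exact le_top
  obtain ⟨D, hD⟩ : ∃ D : ℝ, max (dualFn U y) 0 = (D : EReal) := by
    refine ⟨(max (dualFn U y) 0).toReal, (EReal.coe_toReal ?_ ?_).symm⟩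
    · exact (max_lt (lt_top_iff_ne_top.2 htop) EReal.zero_lt_top).ne
    · exact (lt_of_lt_of_le EReal.bot_lt_zero (le_max_right _ _)).ne'
  have hD0 : 0 ≤ D := by
    have : (0 : EReal) ≤ (D : EReal) := hD ▸ le_max_right _ _
    exact_mod_cast this
  have hDle : ∀ x ∈ interior (posOrthant d), (U x).toReal - (⟪x, y⟫ : ℝ) ≤ D := by
    intro x hx
    have h1 : U x - ((⟪x, y⟫ : ℝ) : EReal) ≤ (D : EReal) :=
      (le_iSup (fun x => U x - ((⟪x, y⟫ : ℝ) : EReal)) x).trans (hD ▸ le_max_left _ _)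
    rw [← EReal.coe_toReal (hU.1.2.1 x) (hfin x hx), ← EReal.coe_sub] at h1
    exact_mod_cast h1
  have hgoal : dualFn U (ε • y) ≤ ((ζ ε * (D + 1) : ℝ) : EReal) := by
    refine dualFn_le_of_forall_interior hU fun x hx => ?_
    have hTpos : 0 < T ε := one_pos.trans_le (hT1 ε hε)
    have hK := hK0 ε hε
    have hKD := mul_nonneg hK hD0
    have hKc := mul_nonneg hK (abs_nonneg c)
    have hKcD := mul_nonneg hKc hD0
    have hcD := mul_nonneg (abs_nonneg c) hD0
    have hVD := mul_nonneg (abs_nonneg (U (diagPt d (R * T ε))).toReal) hD0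
    have hV0 := abs_nonneg (U (diagPt d (R * T ε))).toReal
    have hc0 := abs_nonneg c
    rw [real_inner_smul_right]
    by_cases hnorm : R * T ε ≤ ‖x‖
    · -- Compare with the point `x / T ε`, which still has norm at least `R`.
      have hz : (T ε)⁻¹ • x ∈ interior (posOrthant d) :=
        smul_mem_interior_posOrthant hx (inv_pos.2 hTpos)
      have hRz : R ≤ ‖(T ε)⁻¹ • x‖ := by
        rw [norm_smul, Real.norm_of_nonneg (inv_pos.2 hTpos).le, ← div_eq_inv_mul,
          le_div_iff₀ hTpos]
        exact hnorm
      have h1 := ray_growth hfin hes hlam hel hz hRz (hT1 ε hε)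
      rw [smul_inv_smul₀ hTpos.ne'] at h1
      have h2 := mul_le_mul_of_nonneg_left (hDle _ hz) hK
      have h3 : T ε ^ (1 / lam) * (⟪(T ε)⁻¹ • x, y⟫ : ℝ) = ε * (⟪x, y⟫ : ℝ) := by
        rw [hKT ε hε, real_inner_smul_left]
        field_simp
      rw [mul_sub, h3] at h2
      have h4 := mul_le_mul_of_nonneg_left (le_abs_self c) hK
      have h5 := neg_abs_le c
      simp only [hζdef]
      linarith
    · -- Every coordinate of `x` is at most `R * T ε`.
      have h1 : (U x).toReal ≤ (U (diagPt d (R * T ε))).toReal := by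
        refine toReal_mono hfin hU hx fun i => ?_
        have h2 := (le_abs_self (x i)).trans (PiLp.norm_apply_le x i)
        simp only [PiLp.sub_apply, diagPt_apply]
        linarith [not_le.1 hnorm]
      have h2 := le_abs_self (U (diagPt d (R * T ε))).toReal
      have h3 := mul_nonneg hε.1.le
        (inner_nonneg_of_mem_posOrthant (interior_subset hx) (interior_subset hy))
      simp only [hζdef]
      linarith
  refine hgoal.trans (le_of_eq ?_)
  rw [hD, EReal.coe_mul, EReal.coe_add D 1, EReal.coe_one]
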